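/- Let J be a g-function with log J in the Walters class W(Ω,σ) and let μ be its unique g-measure. For each n∈ℕ let J_n be a g-function such that log J_n is α_n-Hölder for some α_n∈(0,1), and let μ_n be the unique g-measure of J_n. If ‖log J_n − log J‖_∞ → 0 as n→∞, then μ_n → μ in the weak-* topology and h_{μ_n}(σ) → h_μ(σ). -/

import Mathlib

open Real MeasureTheory Filter Topology Set

open scoped Classical

namespace GS

/-- The full shift space `Ω = 𝒜^ℕ`. -/
abbrev Omega (𝒜 : Type) : Type := ℕ → 𝒜

variable {𝒜 : Type}

/-- The left shift `σ(x₁,x₂,…) = (x₂,x₃,…)`. -/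
def shift (x : Omega 𝒜) : Omega 𝒜 := fun n => x (n + 1)

/-- Prepending a symbol: `qx = (q,x₁,x₂,…)`. -/
def cons (q : 𝒜) (x : Omega 𝒜) : Omega 𝒜 := fun n => Nat.casesOn n q x

/-- Concatenation `wx` of a finite word `w ∈ 𝒜^k` with `x ∈ Ω`. -/
def concat {k : ℕ} (w : Fin k → 𝒜) (x : Omega 𝒜) : Omega 𝒜 :=
  fun n => if h : n < k then w ⟨n, h⟩ else x (n - k)

/-- The metric `d(x,y) = 2^{-N(x,y)}`, `N(x,y) = inf{k ≥ 1 : x_k ≠ y_k}`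
(sequences are indexed from `0` in Lean, whence the `+ 1`). -/
noncomputable def dOmega (x y : Omega 𝒜) : ℝ :=
  if x = y then 0 else (1 / 2 : ℝ) ^ (sInf {k : ℕ | x k ≠ y k} + 1)

/-- `a : Ω → E` is `α`-Hölder (w.r.t. `dOmega`):
`Hol_α(a) = sup_{x≠y} ‖a x - a y‖ / d(x,y)^α < ∞`. -/
def IsHolderW (α : ℝ) {E : Type*} [NormedAddCommGroup E] (a : Omega 𝒜 → E) : Prop :=
  ∃ C : ℝ, ∀ x y : Omega 𝒜, ‖a x - a y‖ ≤ C * (dOmega x y) ^ α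

/-- The Hölder constant `Hol_α(a) = sup_{x≠y} ‖a x - a y‖ / d(x,y)^α`. -/
noncomputable def HolConst (α : ℝ) {E : Type*} [NormedAddCommGroup E] (a : Omega 𝒜 → E) : ℝ :=
  sSup {r : ℝ | ∃ x y : Omega 𝒜, x ≠ y ∧ r = ‖a x - a y‖ / (dOmega x y) ^ α}

/-- `J` is a `g`-function: continuous, strictly positive, with `∑_{q∈𝒜} J(qx) = 1`. -/
def IsGFunction [Fintype 𝒜] [TopologicalSpace 𝒜] (J : Omega 𝒜 → ℝ) : Prop :=
  Continuous J ∧ (∀ x, 0 < J x) ∧ ∀ x : Omega 𝒜, ∑ q : 𝒜, J (cons q x) = 1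

/-- The Ruelle transfer operator `(L_f φ)(x) = ∑_{q∈𝒜} e^{f(qx)} φ(qx)`. -/
noncomputable def ruelle [Fintype 𝒜] {E : Type*} [AddCommMonoid E] [Module ℝ E]
    (f : Omega 𝒜 → ℝ) (φ : Omega 𝒜 → E) : Omega 𝒜 → E :=
  fun x => ∑ q : 𝒜, Real.exp (f (cons q x)) • φ (cons q x)

/-- Birkhoff sum `S_k(f) = ∑_{j=0}^{k-1} f ∘ σ^j`. -/
def birkhoff (f : Omega 𝒜 → ℝ) (k : ℕ) (x : Omega 𝒜) : ℝ :=
  ∑ j ∈ Finset.range k, f (shift^[j] x)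

/-- `𝕁(wx) = exp (S_k(log J)(wx))` for a word `w` of length `k`. -/
noncomputable def JBirk (J : Omega 𝒜 → ℝ) (k : ℕ) (w : Fin k → 𝒜) (x : Omega 𝒜) : ℝ :=
  Real.exp (birkhoff (fun z => Real.log (J z)) k (concat w x))

/-- `ζ₊(s) = ∑_{k≥1} ∑_{w∈𝒜^k} a(wx) 𝕁(wx)^s`. -/
noncomputable def zetaPlus [Fintype 𝒜] (J : Omega 𝒜 → ℝ) (a : Omega 𝒜 → ℂ) (x : Omega 𝒜)
    (s : ℝ) : ℂ :=
  ∑' k : ℕ, ∑ w : Fin (k + 1) → 𝒜, a (concat w x) * (((JBirk J (k + 1) w x) ^ s : ℝ) : ℂ)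

/-- `ζ₋(s) = ∑_{k≥1} ∑_{w∈𝒜^k} a(wy) 𝕁(wx)^s`. -/
noncomputable def zetaMinus [Fintype 𝒜] (J : Omega 𝒜 → ℝ) (a : Omega 𝒜 → ℂ) (x y : Omega 𝒜)
    (s : ℝ) : ℂ :=
  ∑' k : ℕ, ∑ w : Fin (k + 1) → 𝒜, a (concat w y) * (((JBirk J (k + 1) w x) ^ s : ℝ) : ℂ)

/-- `L_{log J}^* μ = μ`, i.e. `μ` is a `g`-measure of `J`, tested against continuous functions. -/
def IsGMeasure [Fintype 𝒜] [TopologicalSpace 𝒜] [MeasurableSpace 𝒜]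
    (J : Omega 𝒜 → ℝ) (μ : Measure (Omega 𝒜)) : Prop :=
  IsProbabilityMeasure μ ∧
    ∀ φ : Omega 𝒜 → ℂ, Continuous φ →
      ∫ x, ruelle (fun z => Real.log (J z)) φ x ∂μ = ∫ x, φ x ∂μ

/-- The cylinder set determined by a finite word. -/
def cyl {k : ℕ} (w : Fin k → 𝒜) : Set (Omega 𝒜) := {x | ∀ i : Fin k, x (i : ℕ) = w i}

/-- Entropy of the partition into cylinders of length `n`. -/
noncomputable def blockEntropy [Fintype 𝒜] [MeasurableSpace 𝒜] (μ : Measure (Omega 𝒜))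
    (n : ℕ) : ℝ :=
  ∑ w : Fin n → 𝒜, Real.negMulLog (μ (cyl w)).toReal

/-- Kolmogorov–Sinai entropy `h_μ(σ)` of a shift-invariant measure, computed through the
generating partition into cylinders: `h_μ(σ) = lim_n H_n/n = inf_{n≥1} H_n/n`. -/
noncomputable def KSentropy [Fintype 𝒜] [MeasurableSpace 𝒜] (μ : Measure (Omega 𝒜)) : ℝ :=
  ⨅ n : ℕ, blockEntropy μ (n + 1) / (n + 1)

/-- Topological pressure `P(f) = sup {h_μ(σ) + ∫ f dμ}` over shift-invariant Borel
probability measures. -/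
noncomputable def pressure [Fintype 𝒜] [MeasurableSpace 𝒜] (f : Omega 𝒜 → ℝ) : ℝ :=
  sSup {r : ℝ | ∃ μ : Measure (Omega 𝒜), IsProbabilityMeasure μ ∧
    Measure.map shift μ = μ ∧ r = KSentropy μ + ∫ x, f x ∂μ}

/-- `μ` is an equilibrium state of `f`. -/
def IsEquilibrium [Fintype 𝒜] [MeasurableSpace 𝒜] (f : Omega 𝒜 → ℝ)
    (μ : Measure (Omega 𝒜)) : Prop :=
  IsProbabilityMeasure μ ∧ Measure.map shift μ = μ ∧
    KSentropy μ + ∫ x, f x ∂μ = pressure f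

/-- The Walters class `W(Ω,σ)`:
`sup_{n≥1} sup_{w∈𝒜^n} |S_n(f)(wx) − S_n(f)(wy)| → 0` as `d(x,y) → 0`. -/
def WaltersClass [TopologicalSpace 𝒜] (f : Omega 𝒜 → ℝ) : Prop :=
  Continuous f ∧ ∀ ε > (0:ℝ), ∃ δ > (0:ℝ), ∀ x y : Omega 𝒜, dOmega x y < δ →
    ∀ (n : ℕ) (w : Fin n → 𝒜),
      |birkhoff f n (concat w x) - birkhoff f n (concat w y)| ≤ ε

/-- The set `W*` of finite (nonempty) words over `𝒜`. -/
def Words (𝒜 : Type) : Type := Σ k : ℕ, Fin (k + 1) → 𝒜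

end GS
namespace GS

section Aux

set_option linter.unusedSectionVars false

variable {𝒜 : Type} [Fintype 𝒜] [TopologicalSpace 𝒜] [DiscreteTopology 𝒜] [MeasurableSpace 𝒜] [BorelSpace 𝒜]

lemma aux_cont_cons (q : 𝒜) : Continuous (cons q : Omega 𝒜 → Omega 𝒜) := by
  refine continuous_pi fun n => ?_
  cases n with
  | zero => exact continuous_const
  | succ n => exact continuous_apply n

lemma aux_integrable {E : Type*} [NormedAddCommGroup E] (μ : Measure (Omega 𝒜)) [IsFiniteMeasure μ]
    {φ : Omega 𝒜 → E} (h : Continuous φ) : Integrable φ μ := by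
  have h1 : IntegrableOn φ univ μ := h.continuousOn.integrableOn_compact isCompact_univ
  simpa using h1

lemma aux_ruelle {J : Omega 𝒜 → ℝ} (hJ : IsGFunction J) (φ : Omega 𝒜 → ℂ) (x : Omega 𝒜) :
    ruelle (fun z => Real.log (J z)) φ x = ∑ q : 𝒜, (J (cons q x) : ℂ) * φ (cons q x) := by
  unfold ruelle
  refine Finset.sum_congr rfl fun q _ => ?_
  rw [Real.exp_log (hJ.2.1 _), Complex.real_smul]

/-- Real form of the g-measure equation. -/
lemma aux_real {J : Omega 𝒜 → ℝ} (hJ : IsGFunction J) {μ : Measure (Omega 𝒜)}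
    (hμ : IsGMeasure J μ) {φ : Omega 𝒜 → ℝ} (hφ : Continuous φ) :
    ∫ x, ∑ q : 𝒜, J (cons q x) * φ (cons q x) ∂μ = ∫ x, φ x ∂μ := by
  have h := hμ.2 (fun x => (φ x : ℂ)) (Complex.continuous_ofReal.comp hφ)
  simp_rw [aux_ruelle hJ] at h
  rw [integral_complex_ofReal] at h
  have h2 : ∀ x : Omega 𝒜, ∑ q : 𝒜, (J (cons q x) : ℂ) * (φ (cons q x) : ℂ) =
      ((∑ q : 𝒜, J (cons q x) * φ (cons q x) : ℝ) : ℂ) := by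
    intro x; push_cast; rfl
  simp_rw [h2] at h
  rw [integral_complex_ofReal] at h
  exact_mod_cast h

lemma aux_contL {J : Omega 𝒜 → ℝ} (hJ : IsGFunction J) {E : Type*} [NormedAddCommGroup E]
    [NormedSpace ℝ E] {φ : Omega 𝒜 → E} (hφ : Continuous φ) :
    Continuous (fun x : Omega 𝒜 => ∑ q : 𝒜, J (cons q x) • φ (cons q x)) := by
  refine continuous_finsetSum _ fun q _ => ?_
  exact (hJ.1.comp (aux_cont_cons q)).smul (hφ.comp (aux_cont_cons q))

lemma aux_of_real {J : Omega 𝒜 → ℝ} (hJ : IsGFunction J) {μ : Measure (Omega 𝒜)}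
    [IsProbabilityMeasure μ]
    (h : ∀ φ : Omega 𝒜 → ℝ, Continuous φ →
      ∫ x, ∑ q : 𝒜, J (cons q x) * φ (cons q x) ∂μ = ∫ x, φ x ∂μ) : IsGMeasure J μ := by
  refine ⟨inferInstance, fun φ hφ => ?_⟩
  have e : ruelle (fun z => Real.log (J z)) φ =
      fun x => ∑ q : 𝒜, J (cons q x) • φ (cons q x) := by
    funext x; rw [aux_ruelle hJ]; simp
  have hi1 : Integrable φ μ := aux_integrable μ hφ
  have hi2 : Integrable (ruelle (fun z => Real.log (J z)) φ) μ := by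
    rw [e]; exact aux_integrable μ (aux_contL hJ hφ)
  have hre := h (fun x => (φ x).re) (Complex.continuous_re.comp hφ)
  have him := h (fun x => (φ x).im) (Complex.continuous_im.comp hφ)
  apply Complex.ext
  · have a1 := integral_re (𝕜 := ℂ) hi1
    have a2 := integral_re (𝕜 := ℂ) hi2
    simp only [RCLike.re_eq_complex_re] at a1 a2
    rw [← a1, ← a2, ← hre, e]
    simp
  · have a1 := integral_im (𝕜 := ℂ) hi1
    have a2 := integral_im (𝕜 := ℂ) hi2
    simp only [RCLike.im_eq_complex_im] at a1 a2
    rw [← a1, ← a2, ← him, e]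
    simp

lemma aux_le_one {J : Omega 𝒜 → ℝ} (hJ : IsGFunction J) (q : 𝒜) (x : Omega 𝒜) :
    J (cons q x) ≤ 1 := by
  rw [← hJ.2.2 x]
  exact Finset.single_le_sum (f := fun q => J (cons q x)) (fun i _ => (hJ.2.1 _).le)
    (Finset.mem_univ q)

lemma aux_cons_shift (x : Omega 𝒜) : cons (x 0) (shift x) = x := by
  funext n; cases n <;> rfl

lemma aux_cont_log {J : Omega 𝒜 → ℝ} (hJ : IsGFunction J) :
    Continuous (fun z => Real.log (J z)) :=
  hJ.1.log fun x => (hJ.2.1 x).ne'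

lemma aux_unif {J : Omega 𝒜 → ℝ} (hJ : IsGFunction J)
    {Jn : ℕ → Omega 𝒜 → ℝ} (hJn : ∀ n, IsGFunction (Jn n))
    (hconv : TendstoUniformly (fun n z => Real.log (Jn n z))
      (fun z => Real.log (J z)) atTop) :
    TendstoUniformly Jn J atTop := by
  rw [Metric.tendstoUniformly_iff] at hconv ⊢
  intro ε hε
  filter_upwards [hconv (min (ε/2) 1) (by positivity)] with n hn x
  have h1 := hn x
  rw [dist_comm, Real.dist_eq] at h1 ⊢
  have hJ1 : J x ≤ 1 := by rw [← aux_cons_shift x]; exact aux_le_one hJ _ _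
  have e : Jn n x - J x = J x * (Real.exp (Real.log (Jn n x) - Real.log (J x)) - 1) := by
    rw [Real.exp_sub, Real.exp_log ((hJn n).2.1 x), Real.exp_log (hJ.2.1 x)]
    field_simp [(hJ.2.1 x).ne']
  have h2 := Real.abs_exp_sub_one_le (x := Real.log (Jn n x) - Real.log (J x))
    (h1.le.trans (min_le_right _ _))
  have h3 := h1.trans_le (min_le_left _ _)
  rw [e, abs_mul, abs_of_pos (hJ.2.1 x)]
  have := mul_le_mul hJ1 h2 (abs_nonneg _) zero_le_one
  linarith

/-- uniform convergence plus weak convergence -/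
lemma aux_weak_unif {l : Filter ℕ} {μn : ℕ → Measure (Omega 𝒜)} {ν : Measure (Omega 𝒜)}
    (hp : ∀ n, IsProbabilityMeasure (μn n))
    {f : Omega 𝒜 → ℝ} {F : ℕ → Omega 𝒜 → ℝ} (hf : Continuous f) (hF : ∀ n, Continuous (F n))
    (hu : TendstoUniformly F f l)
    (hw : Tendsto (fun n => ∫ z, f z ∂(μn n)) l (𝓝 (∫ z, f z ∂ν))) :
    Tendsto (fun n => ∫ z, F n z ∂(μn n)) l (𝓝 (∫ z, f z ∂ν)) := by
  have h0 : Tendsto (fun n => ∫ z, F n z ∂(μn n) - ∫ z, f z ∂(μn n)) l (𝓝 0) := by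
    rw [Metric.tendsto_nhds]
    intro ε hε
    rw [Metric.tendstoUniformly_iff] at hu
    filter_upwards [hu (ε/2) (by positivity)] with n hn
    rw [← integral_sub (aux_integrable _ (hF n)) (aux_integrable _ hf), dist_zero_right]
    have := norm_integral_le_of_norm_le_const (μ := μn n) (f := fun a => F n a - f a) (C := ε/2)
      (Eventually.of_forall fun x => by
        have := hn x
        rw [dist_comm, dist_eq_norm] at this; exact this.le)
    simp at this
    simp only [Real.norm_eq_abs]
    linarith
  simpa using h0.add hw

lemma aux_weak {J : Omega 𝒜 → ℝ} (hJ : IsGFunction J)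
    (μ : Measure (Omega 𝒜))
    (huniq : ∀ ν : Measure (Omega 𝒜), IsGMeasure J ν → ν = μ)
    (Jn : ℕ → Omega 𝒜 → ℝ) (hJn : ∀ n, IsGFunction (Jn n))
    (μn : ℕ → Measure (Omega 𝒜)) (hμn : ∀ n, IsGMeasure (Jn n) (μn n))
    (hconv : TendstoUniformly (fun n z => Real.log (Jn n z))
      (fun z => Real.log (J z)) atTop)
    {φ : Omega 𝒜 → ℝ} (hφ : Continuous φ) :
      Tendsto (fun n => ∫ z, φ z ∂(μn n)) atTop (𝓝 (∫ z, φ z ∂μ)) := by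
  have hp : ∀ n, IsProbabilityMeasure (μn n) := fun n => (hμn n).1
  have hU := aux_unif hJ hJn hconv
  rw [tendsto_iff_ultrafilter]
  intro U hUl
  let P : ℕ → ProbabilityMeasure (Omega 𝒜) := fun n => ⟨μn n, hp n⟩
  obtain ⟨ν, -, hν⟩ := isCompact_univ.ultrafilter_le_nhds (U.map P) (by simp)
  have hν' : Tendsto P U (𝓝 ν) := hν
  have hw : ∀ f : Omega 𝒜 → ℝ, Continuous f →
      Tendsto (fun n => ∫ z, f z ∂(μn n)) U (𝓝 (∫ z, f z ∂(ν : Measure (Omega 𝒜)))) := by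
    intro f hf
    exact ProbabilityMeasure.tendsto_iff_forall_integral_tendsto.1 hν'
      (BoundedContinuousFunction.mkOfCompact ⟨f, hf⟩)
  have hg : IsGMeasure J (ν : Measure (Omega 𝒜)) := by
    refine aux_of_real hJ fun f hf => ?_
    have c1 := aux_contL hJ hf
    have c2 := fun n => aux_contL (hJn n) hf
    simp only [smul_eq_mul] at c1 c2
    have t1 := aux_weak_unif (l := U) (F := fun n x => ∑ q : 𝒜, Jn n (cons q x) * f (cons q x))
      hp c1 c2 ?_ (hw _ c1)
    · simp_rw [fun n => aux_real (hJn n) (hμn n) hf] at t1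
      exact tendsto_nhds_unique t1 (hw f hf)
    · obtain ⟨C, hC⟩ := isCompact_univ.exists_bound_of_continuousOn hf.continuousOn
      rw [Metric.tendstoUniformly_iff] at hU ⊢
      intro ε hε
      have hC0 : 0 ≤ |C| := abs_nonneg C
      set K : ℝ := (Fintype.card 𝒜 : ℝ) * |C| with hK
      have hK0 : 0 ≤ K := by positivity
      filter_upwards [hUl (hU (ε/(K+1)) (by positivity))] with n hn x
      rw [dist_comm, Real.dist_eq, ← Finset.sum_sub_distrib]
      have : |∑ q : 𝒜, (Jn n (cons q x) * f (cons q x) - J (cons q x) * f (cons q x))|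
          ≤ ∑ q : 𝒜, ε/(K+1) * |C| := by
        refine (Finset.abs_sum_le_sum_abs _ _).trans (Finset.sum_le_sum fun q _ => ?_)
        rw [← sub_mul, abs_mul]
        have h1 := hn (cons q x)
        rw [dist_comm, Real.dist_eq] at h1
        have h2 := (hC (cons q x) trivial).trans (le_abs_self C)
        exact mul_le_mul h1.le h2 (abs_nonneg _) (by positivity)
      refine this.trans_lt ?_
      rw [Finset.sum_const, Finset.card_univ, nsmul_eq_mul]
      have : (Fintype.card 𝒜 : ℝ) * (ε/(K+1) * |C|) = ε * (K/(K+1)) := by rw [hK]; ring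
      rw [this]
      have : K/(K+1) < 1 := by rw [div_lt_one (by positivity)]; linarith
      nlinarith
  have := hw φ hφ
  rwa [huniq _ hg] at this

end Aux

section Aux2

set_option linter.unusedSectionVars false

variable {𝒜 : Type} [Fintype 𝒜] [TopologicalSpace 𝒜] [DiscreteTopology 𝒜] [MeasurableSpace 𝒜] [BorelSpace 𝒜]

lemma aux_isClopen_cyl {k : ℕ} (w : Fin k → 𝒜) : IsClopen (cyl w) := by
  have : cyl w = ⋂ i : Fin k, (fun x : Omega 𝒜 => x (i : ℕ)) ⁻¹' {w i} := by
    ext x; simp [cyl]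
  rw [this]
  exact isClopen_iInter_of_finite fun i => (isClopen_discrete _).preimage (continuous_apply _)

lemma aux_meas_cyl {k : ℕ} (w : Fin k → 𝒜) : MeasurableSet (cyl w) :=
  (aux_isClopen_cyl w).isOpen.measurableSet

lemma aux_cons_mem {k : ℕ} (q r : 𝒜) (w : Fin k → 𝒜) (x : Omega 𝒜) :
    cons r x ∈ cyl (Fin.cons q w : Fin (k+1) → 𝒜) ↔ r = q ∧ x ∈ cyl w := by
  simp only [cyl, mem_setOf_eq, Fin.forall_fin_succ, Fin.cons_zero, Fin.cons_succ]
  rfl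

lemma aux_cyl_cons {J : Omega 𝒜 → ℝ} (hJ : IsGFunction J) {μ : Measure (Omega 𝒜)}
    (hμ : IsGMeasure J μ) {k : ℕ} (q : 𝒜) (w : Fin k → 𝒜) :
    (μ (cyl (Fin.cons q w : Fin (k+1) → 𝒜))).toReal = ∫ x in cyl w, J (cons q x) ∂μ := by
  have hc : Continuous (indicator (cyl (Fin.cons q w : Fin (k+1) → 𝒜)) (fun _ => (1:ℝ))) :=
    (aux_isClopen_cyl _).continuous_indicator continuous_const
  have h := aux_real hJ hμ hc
  rw [integral_indicator (aux_meas_cyl _)] at h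
  simp only [integral_const, smul_eq_mul, mul_one, measureReal_restrict_apply_univ] at h
  rw [← measureReal_def, ← h, ← integral_indicator (aux_meas_cyl w)]
  congr 1
  funext x
  rw [Finset.sum_eq_single q]
  · by_cases hx : x ∈ cyl w
    · have : cons q x ∈ cyl (Fin.cons q w : Fin (k+1) → 𝒜) := (aux_cons_mem q q w x).2 ⟨rfl, hx⟩
      simp [hx, this]
    · have : cons q x ∉ cyl (Fin.cons q w : Fin (k+1) → 𝒜) :=
        fun h => hx ((aux_cons_mem q q w x).1 h).2
      simp [hx, this]
  · intro r _ hr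
    have : cons r x ∉ cyl (Fin.cons q w : Fin (k+1) → 𝒜) :=
      fun h => hr ((aux_cons_mem q r w x).1 h).1
    simp [this]
  · simp

lemma aux_sum_cyl (μ : Measure (Omega 𝒜)) [IsFiniteMeasure μ] (n : ℕ) {f : Omega 𝒜 → ℝ}
    (hf : Continuous f) : ∑ w : Fin n → 𝒜, ∫ x in cyl w, f x ∂μ = ∫ x, f x ∂μ := by
  rw [← integral_iUnion_fintype (fun w => aux_meas_cyl w)]
  · have : (⋃ w : Fin n → 𝒜, cyl w) = univ := by
      ext x
      simp only [mem_iUnion, mem_univ, iff_true]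
      exact ⟨fun i => x i, fun i => rfl⟩
    rw [this, Measure.restrict_univ]
  · intro v w hvw
    refine Set.disjoint_left.2 fun x hv hw => hvw ?_
    funext i
    rw [← hv i, hw i]
  · intro w
    exact (aux_integrable μ hf).integrableOn

/-- The one-symbol conditional entropy estimate. -/
lemma aux_key (ν : Measure (Omega 𝒜)) [IsFiniteMeasure ν]
    {f : Omega 𝒜 → ℝ} (hf : Continuous f) (hpos : ∀ x, 0 < f x) :
    ∫ x, Real.negMulLog (f x) ∂ν ≤
      Real.negMulLog (∫ x, f x ∂ν) + (∫ x, f x ∂ν) * Real.log (ν.real univ) := by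
  by_cases h0 : ν = 0
  · simp [h0]
  have ha : 0 < ν.real univ := by
    rw [measureReal_def, ENNReal.toReal_pos_iff]
    exact ⟨by simpa [pos_iff_ne_zero] using h0, measure_lt_top _ _⟩
  have hfi := aux_integrable ν hf
  have hI : 0 < ∫ x, f x ∂ν := by
    rw [integral_pos_iff_support_of_nonneg (fun x => (hpos x).le) hfi]
    have : Function.support f = univ := by ext x; simp [(hpos x).ne']
    rw [this]; simpa [pos_iff_ne_zero] using h0
  set a := ν.real univ
  set I := ∫ x, f x ∂ν with hIdef
  set p := I / a with hp
  have hp0 : 0 < p := div_pos hI ha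
  have hle : ∀ x, Real.negMulLog (f x) ≤ f x * (-Real.log p - 1) + p := by
    intro x
    have h1 := Real.log_le_sub_one_of_pos (div_pos hp0 (hpos x))
    rw [Real.log_div hp0.ne' (hpos x).ne'] at h1
    have h2 := mul_le_mul_of_nonneg_left h1 (hpos x).le
    have h3 : f x * (p / f x - 1) = p - f x := by field_simp [(hpos x).ne']
    rw [h3] at h2
    rw [Real.negMulLog]
    linarith
  have h1 : ∫ x, Real.negMulLog (f x) ∂ν ≤ ∫ x, (f x * (-Real.log p - 1) + p) ∂ν := by
    refine integral_mono (aux_integrable ν (Real.continuous_negMulLog.comp hf)) ?_ hle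
    exact (hfi.mul_const _).add (integrable_const _)
  rw [integral_add (hfi.mul_const _) (integrable_const _), integral_mul_const, integral_const,
    smul_eq_mul, ← hIdef] at h1
  have h2 : a * p = I := by rw [hp]; field_simp
  have h3 : Real.log p = Real.log I - Real.log a := Real.log_div hI.ne' ha.ne'
  change _ ≤ _ + a * p at h1
  rw [h2, h3] at h1
  rw [Real.negMulLog]
  linarith

lemma aux_key2 (ν : Measure (Omega 𝒜)) [IsFiniteMeasure ν] {s : Set (Omega 𝒜)}
    (hs : MeasurableSet s)
    {f : Omega 𝒜 → ℝ} (hf : Continuous f) (hpos : ∀ x, 0 < f x) {ε : ℝ}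
    (hε : ∀ x ∈ s, ∀ y ∈ s, |Real.log (f x) - Real.log (f y)| ≤ ε) :
      Real.negMulLog (∫ x in s, f x ∂ν) + (∫ x in s, f x ∂ν) * Real.log (ν.real s)
      ≤ ∫ x in s, (Real.negMulLog (f x) + ε * f x) ∂ν := by
  by_cases h0 : ν s = 0
  · simp [Measure.restrict_eq_zero.2 h0]
  have ha : 0 < ν.real s := by
    rw [measureReal_def, ENNReal.toReal_pos_iff]
    exact ⟨pos_iff_ne_zero.2 h0, measure_lt_top _ _⟩
  have hfi : IntegrableOn f s ν := (aux_integrable ν hf).integrableOn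
  have hlow : ∀ x ∈ s, ν.real s * (f x * Real.exp (-ε)) ≤ ∫ y in s, f y ∂ν := by
    intro x hx
    have : ∫ y in s, f x * Real.exp (-ε) ∂ν ≤ ∫ y in s, f y ∂ν := by
      refine setIntegral_mono_on (integrable_const _) hfi hs fun y hy => ?_
      have h1 := (abs_le.1 (hε x hx y hy)).2
      calc f x * Real.exp (-ε) = Real.exp (Real.log (f x) - ε) := by
            rw [sub_eq_add_neg, Real.exp_add, Real.exp_log (hpos x)]
        _ ≤ Real.exp (Real.log (f y)) := Real.exp_le_exp.2 (by linarith)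
        _ = f y := Real.exp_log (hpos y)
    simpa using this
  set I := ∫ x in s, f x ∂ν with hIdef
  set a := ν.real s with hadef
  have e : Real.negMulLog I + I * Real.log a = ∫ x in s, f x * (Real.log a - Real.log I) ∂ν := by
    rw [integral_mul_const, Real.negMulLog]; ring
  rw [e]
  refine setIntegral_mono_on (hfi.mul_const _) ?_ hs fun x hx => ?_
  · exact (aux_integrable ν ((Real.continuous_negMulLog.comp hf).add
      (continuous_const.mul hf))).integrableOn
  · have h1 := Real.log_le_log (mul_pos ha (mul_pos (hpos x) (Real.exp_pos _))) (hlow x hx)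
    rw [Real.log_mul ha.ne' (mul_pos (hpos x) (Real.exp_pos _)).ne',
      Real.log_mul (hpos x).ne' (Real.exp_pos _).ne', Real.log_exp] at h1
    have h2 : Real.log a - Real.log I ≤ -Real.log (f x) + ε := by linarith
    have h3 := mul_le_mul_of_nonneg_left h2 (hpos x).le
    rw [Real.negMulLog]
    linarith

lemma aux_unif_cont {f : Omega 𝒜 → ℝ} (hf : Continuous f) {ε : ℝ} (hε : 0 < ε) :
    ∃ N : ℕ, ∀ x y : Omega 𝒜, (∀ i < N, x i = y i) → |f x - f y| ≤ ε := by
  letI : MetricSpace (Omega 𝒜) := PiNat.metricSpace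
  have hu := CompactSpace.uniformContinuous_of_continuous hf
  obtain ⟨δ, hδ, h⟩ := Metric.uniformContinuous_iff.1 hu ε hε
  obtain ⟨N, hN⟩ := exists_pow_lt_of_lt_one hδ (by norm_num : (1/2 : ℝ) < 1)
  refine ⟨N, fun x y hxy => ?_⟩
  have : dist x y ≤ (1/2 : ℝ) ^ N := PiNat.mem_cylinder_iff_dist_le.1 (fun i hi => hxy i hi)
  exact (h (this.trans_lt hN)).le

lemma aux_step_eq {J : Omega 𝒜 → ℝ} (hJ : IsGFunction J) {μ : Measure (Omega 𝒜)}
    (hμ : IsGMeasure J μ) (n : ℕ) :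
    blockEntropy μ (n+1) - blockEntropy μ n = ∑ w : Fin n → 𝒜, ∑ q : 𝒜,
      (Real.negMulLog (∫ x in cyl w, J (cons q x) ∂μ) +
        (∫ x in cyl w, J (cons q x) ∂μ) * Real.log (μ.real (cyl w))) := by
  have := hμ.1
  have e1 : blockEntropy μ (n+1) = ∑ w : Fin n → 𝒜, ∑ q : 𝒜,
      Real.negMulLog (∫ x in cyl w, J (cons q x) ∂μ) := by
    unfold blockEntropy
    rw [← Equiv.sum_comp (Fin.consEquiv (fun _ : Fin (n+1) => 𝒜)), Fintype.sum_prod_type_right]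
    refine Finset.sum_congr rfl fun w _ => Finset.sum_congr rfl fun q _ => ?_
    rw [← aux_cyl_cons hJ hμ]
    rfl
  rw [e1, blockEntropy, ← Finset.sum_sub_distrib]
  refine Finset.sum_congr rfl fun w _ => ?_
  rw [Finset.sum_add_distrib, ← Finset.sum_mul, ← integral_finsetSum]
  · simp_rw [hJ.2.2]
    rw [Real.negMulLog]
    simp [measureReal_def]
  · intro q _
    exact (aux_integrable μ (hJ.1.comp (aux_cont_cons q))).integrableOn

lemma aux_total {J : Omega 𝒜 → ℝ} (hJ : IsGFunction J) {μ : Measure (Omega 𝒜)}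
    (hμ : IsGMeasure J μ) (n : ℕ) (ε : ℝ) :
    ∑ w : Fin n → 𝒜, ∑ q : 𝒜,
      ∫ x in cyl w, (Real.negMulLog (J (cons q x)) + ε * J (cons q x)) ∂μ
      = -∫ x, Real.log (J x) ∂μ + ε := by
  have := hμ.1
  have hc : ∀ q : 𝒜, Continuous fun x => Real.negMulLog (J (cons q x)) + ε * J (cons q x) :=
    fun q => (Real.continuous_negMulLog.comp (hJ.1.comp (aux_cont_cons q))).add
      (continuous_const.mul (hJ.1.comp (aux_cont_cons q)))
  rw [Finset.sum_comm]
  simp_rw [fun q => aux_sum_cyl μ n (hc q)]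
  rw [← integral_finsetSum _ (fun q _ => aux_integrable μ (hc q))]
  have hcl : Continuous fun x => -Real.log (J x) + ε := (aux_cont_log hJ).neg.add continuous_const
  have h := aux_real hJ hμ hcl
  rw [integral_add (f := fun x => -Real.log (J x)) (aux_integrable μ (aux_cont_log hJ).neg) (integrable_const _),
    integral_neg] at h
  simp only [integral_const, probReal_univ, one_smul] at h
  rw [← h]
  congr 1
  funext x
  refine Finset.sum_congr rfl fun q _ => ?_
  rw [Real.negMulLog]; ring

lemma aux_step_ge {J : Omega 𝒜 → ℝ} (hJ : IsGFunction J) {μ : Measure (Omega 𝒜)}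
    (hμ : IsGMeasure J μ) (n : ℕ) :
    -∫ x, Real.log (J x) ∂μ ≤ blockEntropy μ (n+1) - blockEntropy μ n := by
  have := hμ.1
  rw [aux_step_eq hJ hμ, ← add_zero (-∫ x, Real.log (J x) ∂μ), ← aux_total hJ hμ n 0]
  refine Finset.sum_le_sum fun w _ => Finset.sum_le_sum fun q _ => ?_
  have := aux_key (μ.restrict (cyl w)) (hJ.1.comp (aux_cont_cons q)) (fun x => hJ.2.1 _)
  simpa using this

lemma aux_step_tendsto {J : Omega 𝒜 → ℝ} (hJ : IsGFunction J) {μ : Measure (Omega 𝒜)}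
    (hμ : IsGMeasure J μ) :
    Tendsto (fun n => blockEntropy μ (n+1) - blockEntropy μ n) atTop
      (𝓝 (-∫ x, Real.log (J x) ∂μ)) := by
  have := hμ.1
  rw [Metric.tendsto_atTop]
  intro ε hε
  obtain ⟨N, hN⟩ := aux_unif_cont (aux_cont_log hJ) (half_pos hε)
  refine ⟨N, fun n hn => ?_⟩
  have hlow := aux_step_ge hJ hμ n
  have hup : blockEntropy μ (n+1) - blockEntropy μ n ≤ -∫ x, Real.log (J x) ∂μ + ε/2 := by
    rw [aux_step_eq hJ hμ, ← aux_total hJ hμ n (ε/2)]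
    refine Finset.sum_le_sum fun w _ => Finset.sum_le_sum fun q _ => ?_
    refine aux_key2 μ (aux_meas_cyl w) (hJ.1.comp (aux_cont_cons q)) (fun x => hJ.2.1 _) ?_
    intro x hx y hy
    refine hN _ _ fun i hi => ?_
    cases i with
    | zero => rfl
    | succ i =>
      have hin : i < n := by omega
      exact (hx ⟨i, hin⟩).trans (hy ⟨i, hin⟩).symm
  rw [Real.dist_eq, abs_lt]
  constructor <;> linarith

lemma aux_entropy {J : Omega 𝒜 → ℝ} (hJ : IsGFunction J) {μ : Measure (Omega 𝒜)}
    (hμ : IsGMeasure J μ) : KSentropy μ = -∫ x, Real.log (J x) ∂μ := by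
  have := hμ.1
  have h0 : blockEntropy μ 0 = 0 := by
    have : ∀ w : Fin 0 → 𝒜, cyl w = univ := by
      intro w; ext x; simp [cyl]
    simp [blockEntropy, this]
  set h := -∫ x, Real.log (J x) ∂μ
  have hces := (aux_step_tendsto hJ hμ).cesaro
  have hlow : ∀ n : ℕ, h ≤ blockEntropy μ (n+1) / (n+1) := by
    intro n
    have h1 := Finset.card_nsmul_le_sum (Finset.range (n+1))
      (fun n => blockEntropy μ (n+1) - blockEntropy μ n) h (fun i _ => aux_step_ge hJ hμ i)
    rw [Finset.sum_range_sub, h0, Finset.card_range, nsmul_eq_mul, sub_zero] at h1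
    rw [le_div_iff₀ (by positivity)]
    push_cast at h1
    linarith
  have ht : Tendsto (fun n : ℕ => blockEntropy μ (n+1) / ((n:ℝ)+1)) atTop (𝓝 h) := by
    have := hces.comp (tendsto_add_atTop_nat 1)
    refine this.congr fun n => ?_
    simp only [Function.comp]
    rw [Finset.sum_range_sub, h0]
    push_cast
    rw [sub_zero, inv_mul_eq_div]
  apply le_antisymm
  · refine ge_of_tendsto' ht fun n => ?_
    exact ciInf_le ⟨h, by rintro _ ⟨n, rfl⟩; exact hlow n⟩ n
  · exact le_ciInf hlow

end Aux2

/-- continuity of `g`-measures and of the entropy, used in Theorem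
`teo-spec-trip-walters` of the paper.
If `log J` is in the Walters class with unique `g`-measure `μ`, and `J_n` are `g`-functions
with `log J_n` `α_n`-Hölder, with unique `g`-measures `μ_n`, and `‖log J_n − log J‖_∞ → 0`,
then `μ_n → μ` weakly-* and `h_{μ_n}(σ) → h_μ(σ)`. -/
theorem statement18 {𝒜 : Type} [Fintype 𝒜] [TopologicalSpace 𝒜] [DiscreteTopology 𝒜]
    [MeasurableSpace 𝒜] [BorelSpace 𝒜] (hcard : 2 ≤ Fintype.card 𝒜)
    (J : Omega 𝒜 → ℝ) (hJ : IsGFunction J)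
    (hW : WaltersClass (fun z => Real.log (J z)))
    (μ : Measure (Omega 𝒜)) (hμ : IsGMeasure J μ)
    (huniq : ∀ ν : Measure (Omega 𝒜), IsGMeasure J ν → ν = μ)
    (Jn : ℕ → Omega 𝒜 → ℝ) (hJn : ∀ n, IsGFunction (Jn n))
    (αn : ℕ → ℝ) (hαn : ∀ n, αn n ∈ Set.Ioo (0 : ℝ) 1)
    (hHoln : ∀ n, IsHolderW (αn n) (fun z => Real.log (Jn n z)))
    (μn : ℕ → Measure (Omega 𝒜)) (hμn : ∀ n, IsGMeasure (Jn n) (μn n))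
    (huniqn : ∀ n, ∀ ν : Measure (Omega 𝒜), IsGMeasure (Jn n) ν → ν = μn n)
    (hconv : TendstoUniformly (fun n z => Real.log (Jn n z))
      (fun z => Real.log (J z)) atTop) :
    (∀ φ : Omega 𝒜 → ℝ, Continuous φ →
      Tendsto (fun n => ∫ z, φ z ∂(μn n)) atTop (𝓝 (∫ z, φ z ∂μ))) ∧
    Tendsto (fun n => KSentropy (μn n)) atTop (𝓝 (KSentropy μ)) := by
  have hweak := fun (φ : Omega 𝒜 → ℝ) (hφ : Continuous φ) =>
    aux_weak hJ μ huniq Jn hJn μn hμn hconv hφ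
  refine ⟨hweak, ?_⟩
  rw [aux_entropy hJ hμ]
  simp_rw [fun n => aux_entropy (hJn n) (hμn n)]
  exact (aux_weak_unif (fun n => (hμn n).1) (aux_cont_log hJ) (fun n => aux_cont_log (hJn n))
    hconv (hweak _ (aux_cont_log hJ))).neg

end GS
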